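/- Let π* be an optimal assignment for weights w and let (a,b) be an edge not assigned in π*. Then for every real t with t ≥ s_w(a,b), the single-edge perturbation δ defined by δ(a,b) = t and δ = 0 on all other edges is an allowable perturbation for (w, π*). -/

import Mathlib

open Finset Filter Topology

/-- Cost of an assignment `π : T → A` under weights `w : A × T → ℝ`. -/
noncomputable def cost {A T : Type*} [Fintype T] (w : A × T → ℝ) (π : T → A) : ℝ :=
  ∑ b : T, w (π b, b)

/-- `πs` is an optimal assignment for weights `w`: it is injective (an assignment)
and minimizes the cost among all assignments. -/
def Optimal {A T : Type*} [Fintype T] (w : A × T → ℝ) (πs : T → A) : Prop :=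
  Function.Injective πs ∧ ∀ π : T → A, Function.Injective π → cost w πs ≤ cost w π

/-- `δ` is an allowable perturbation for `(w, πs)`: `πs` remains optimal for `w + δ`. -/
def Allowable {A T : Type*} [Fintype T] (w δ : A × T → ℝ) (πs : T → A) : Prop :=
  Optimal (w + δ) πs

-- The element-wise sensitivity of edge `(a, b)` for weights `w` and assignment `πs`.
open Classical in
noncomputable def sens {A T : Type*} [Fintype T] (w : A × T → ℝ) (πs : T → A)
    (a : A) (b : T) : ℝ :=
  if πs b = a then
    sInf {c | ∃ π : T → A, Function.Injective π ∧ π b ≠ a ∧ cost w π = c} - cost w πs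
  else
    cost w πs - sInf {c | ∃ π : T → A, Function.Injective π ∧ π b = a ∧ cost w π = c}

/-! A perturbation shifts the cost of an assignment by its own cost, so raising the edge `(a, b)`
by `t` adds `t` to exactly those assignments that use `(a, b)`. An optimal assignment that avoids
the edge keeps its cost, and it beats each assignment using the edge by at least `-sens`, so it
stays optimal as long as `sens ≤ t`. -/

section

variable {A T : Type*} [Fintype T]

theorem cost_add (w δ : A × T → ℝ) (π : T → A) : cost (w + δ) π = cost w π + cost δ π :=
  Finset.sum_add_distrib

open Classical in
theorem cost_single_edge (π : T → A) (a : A) (b : T) (t : ℝ) :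
    cost (fun e => if e = (a, b) then t else 0) π = if π b = a then t else 0 := by
  have off_b (b' : T) (hb' : b' ≠ b) : (if (π b', b') = (a, b) then t else 0) = 0 :=
    if_neg fun h => hb' (congrArg Prod.snd h)
  rw [cost, Fintype.sum_eq_single b off_b]
  simp only [Prod.mk.injEq, and_true]

theorem Optimal.cost_sub_cost_le_sens {w : A × T → ℝ} {πs : T → A} (hopt : Optimal w πs)
    {a : A} {b : T} (hab : πs b ≠ a) {π : T → A} (hπ : Function.Injective π) (hb : π b = a) :
    cost w πs - cost w π ≤ sens w πs a b := by
  have bddBelow_costs :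
      BddBelow {c | ∃ σ : T → A, Function.Injective σ ∧ σ b = a ∧ cost w σ = c} := by
    refine ⟨cost w πs, ?_⟩
    rintro _ ⟨σ, hσ, -, rfl⟩
    exact hopt.2 σ hσ
  rw [sens, if_neg hab]
  exact sub_le_sub_left (csInf_le bddBelow_costs ⟨π, hπ, hb, rfl⟩) _

open Classical in
theorem stmt4_general {w : A × T → ℝ} {πs : T → A} (hopt : Optimal w πs)
    {a : A} {b : T} (hab : πs b ≠ a) {t : ℝ} (ht : sens w πs a b ≤ t) :
    Allowable w (fun e => if e = (a, b) then t else 0) πs := by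
  refine ⟨hopt.1, fun π hπ => ?_⟩
  rw [cost_add, cost_add, cost_single_edge, cost_single_edge, if_neg hab, add_zero]
  by_cases hb : π b = a
  · rw [if_pos hb]
    exact sub_le_iff_le_add'.mp ((hopt.cost_sub_cost_le_sens hab hπ hb).trans ht)
  · rw [if_neg hb, add_zero]
    exact hopt.2 π hπ

end

open Classical in
theorem stmt4 {A T : Type*} [Fintype A] [Fintype T] [Nonempty A] [Nonempty T]
    (hT : 2 ≤ Fintype.card T) (hAT : Fintype.card T ≤ Fintype.card A)
    (w : A × T → ℝ) (πs : T → A)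
    (hopt : Optimal w πs)
    (a : A) (b : T) (hab : πs b ≠ a)
    (t : ℝ) (ht : sens w πs a b ≤ t) :
    Allowable w (fun e => if e = (a, b) then t else 0) πs :=
  stmt4_general hopt hab ht
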